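/- There exists a natural number n₀ such that for every n ≥ n₀ the following holds. Let m = ⌈n / log₂ n⌉ and let n stations independently and uniformly at random each choose one of m groups. Then for every fixed group b, the probability that the load of b is at most (1/4)·log₂ n is at most n^(−1/3). -/

import Mathlib

open MeasureTheory

/-- The uniform probability measure on `Fin m` (for `m ≥ 1`): counting measure
normalized by the cardinality `m`. -/
noncomputable def uniformFin (m : ℕ) : Measure (Fin m) :=
  (m : ENNReal)⁻¹ • Measure.count

/-- The distribution of `n` stations each independently and uniformly choosing one of
`m` groups: the product of `n` copies of the uniform measure on `Fin m`. -/
noncomputable def uniformChoices (n m : ℕ) : Measure (Fin n → Fin m) :=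
  Measure.pi fun _ => uniformFin m

/-- The load of group `b` under the outcome `X`: the number of stations choosing `b`. -/
def load {n m : ℕ} (X : Fin n → Fin m) (b : Fin m) : ℕ :=
  (Finset.univ.filter fun i => X i = b).card

/-!
The load of a group is a sum of `n` independent indicators, each of mean `1 / m`, so by
Chernoff's method
`P(load ≤ c) ≤ exp (-t * c + (exp t - 1) * n / m)` for every `t ≤ 0`.
Write `L = log₂ n`. For `n ≥ 16` rounding up to `m = ⌈n / L⌉` lowers the mean load from `L` only to
`n / m ≥ 4 / 5 * L`. With `c = L / 4` the optimal `exp t` is the ratio `5 / 16` of threshold to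
mean; the nearby value `exp t = 1 / 4` gives the exponent `(log 2 / 2 - 3 / 5) * L`, which is at
most `-(log 2 / 3) * L` because `log 2 ≤ 18 / 25`.
-/

open ProbabilityTheory Set

section Chernoff

variable {Ω ι : Type*} {mΩ : MeasurableSpace Ω} {μ : Measure Ω}

lemma mgf_indicator_one [IsProbabilityMeasure μ] {A : Set Ω} (hA : MeasurableSet A) (t : ℝ) :
    mgf (A.indicator fun _ ↦ 1) μ t = 1 + (Real.exp t - 1) * μ.real A := by
  have hexp : (fun ω ↦ Real.exp (t * A.indicator (fun _ ↦ 1) ω)) =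
      fun ω ↦ 1 + A.indicator (fun _ ↦ Real.exp t - 1) ω := by
    ext ω
    by_cases hω : ω ∈ A <;> simp [hω]
  rw [mgf, hexp, integral_add (integrable_const 1) ((integrable_const _).indicator hA),
    integral_indicator_const _ hA]
  simp [mul_comm]

lemma mgf_indicator_one_le_exp [IsProbabilityMeasure μ] {A : Set Ω} (hA : MeasurableSet A)
    (t : ℝ) : mgf (A.indicator fun _ ↦ 1) μ t ≤ Real.exp ((Real.exp t - 1) * μ.real A) := by
  rw [mgf_indicator_one hA, add_comm]
  exact Real.add_one_le_exp _

lemma mgf_sum_indicator_one_le_exp {A : ι → Set Ω} (hA : ∀ i, MeasurableSet (A i))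
    (hindep : iIndepSet A μ) (s : Finset ι) (t : ℝ) :
    mgf (∑ i ∈ s, (A i).indicator fun _ ↦ 1) μ t ≤
      Real.exp ((Real.exp t - 1) * ∑ i ∈ s, μ.real (A i)) := by
  have := hindep.isProbabilityMeasure
  rw [hindep.iIndepFun_indicator.mgf_sum (fun i ↦ measurable_const.indicator (hA i)),
    Finset.mul_sum, Real.exp_sum]
  exact Finset.prod_le_prod (fun _ _ ↦ mgf_nonneg) fun i _ ↦ mgf_indicator_one_le_exp (hA i) t

theorem measureReal_sum_indicator_one_le_le_exp {A : ι → Set Ω} (hA : ∀ i, MeasurableSet (A i))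
    (hindep : iIndepSet A μ) (s : Finset ι) {t : ℝ} (ht : t ≤ 0) (c : ℝ) :
    μ.real {ω | (∑ i ∈ s, (A i).indicator (fun _ ↦ (1 : ℝ))) ω ≤ c} ≤
      Real.exp (-t * c + (Real.exp t - 1) * ∑ i ∈ s, μ.real (A i)) := by
  have := hindep.isProbabilityMeasure
  have hint : Integrable
      (fun ω ↦ Real.exp (t * (∑ i ∈ s, (A i).indicator (fun _ ↦ (1 : ℝ))) ω)) μ :=
    hindep.iIndepFun_indicator.integrable_exp_mul_sum
      (fun i ↦ measurable_const.indicator (hA i)) fun i _ ↦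
        integrable_exp_mul_of_mem_Icc (a := 0) (b := 1)
          (measurable_const.indicator (hA i)).aemeasurable
          (.of_forall fun ω ↦ by by_cases hω : ω ∈ A i <;> simp [hω])
  calc μ.real {ω | (∑ i ∈ s, (A i).indicator (fun _ ↦ (1 : ℝ))) ω ≤ c}
    _ ≤ Real.exp (-t * c) * mgf (∑ i ∈ s, (A i).indicator fun _ ↦ 1) μ t :=
      measure_le_le_exp_mul_mgf c ht hint
    _ ≤ Real.exp (-t * c) * Real.exp ((Real.exp t - 1) * ∑ i ∈ s, μ.real (A i)) := by
      gcongr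
      exact mgf_sum_indicator_one_le_exp hA hindep s t
    _ = _ := (Real.exp_add _ _).symm

end Chernoff

lemma iIndepSet_pi_eval_preimage {ι : Type*} [Fintype ι] {Ω : ι → Type*}
    [∀ i, MeasurableSpace (Ω i)] (μ : ∀ i, Measure (Ω i)) [∀ i, IsProbabilityMeasure (μ i)]
    {B : ∀ i, Set (Ω i)} (hB : ∀ i, MeasurableSet (B i)) :
    iIndepSet (fun i ↦ Function.eval i ⁻¹' B i) (Measure.pi μ) := by
  rw [iIndepSet_iff_meas_biInter fun i ↦ measurable_pi_apply i (hB i)]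
  have hcoord : iIndepFun (fun i (ω : ∀ i, Ω i) ↦ ω i) (Measure.pi μ) :=
    iIndepFun_pi (X := fun _ ↦ id) fun _ ↦ aemeasurable_id
  exact fun s ↦ hcoord.measure_inter_preimage_eq_mul s fun i _ ↦ hB i

section UniformChoices

variable {n m : ℕ}

instance isProbabilityMeasure_uniformFin [NeZero m] : IsProbabilityMeasure (uniformFin m) where
  measure_univ := by simp [uniformFin, ENNReal.inv_mul_cancel, NeZero.ne]

instance isProbabilityMeasure_uniformChoices [NeZero m] :
    IsProbabilityMeasure (uniformChoices n m) := by
  unfold uniformChoices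
  infer_instance

lemma uniformFin_real_singleton (b : Fin m) : (uniformFin m).real {b} = (m : ℝ)⁻¹ := by
  simp [uniformFin, measureReal_def]

lemma uniformChoices_real_eval_preimage_singleton (i : Fin n) (b : Fin m) :
    (uniformChoices n m).real (Function.eval i ⁻¹' {b}) = (m : ℝ)⁻¹ := by
  have : NeZero m := ⟨b.pos.ne'⟩
  rw [uniformChoices, (measurePreserving_eval (fun _ ↦ uniformFin m) i).measureReal_preimage
    (measurableSet_singleton b).nullMeasurableSet, uniformFin_real_singleton]

lemma load_eq_sum_indicator (X : Fin n → Fin m) (b : Fin m) :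
    (load X b : ℝ) =
      (∑ i, (Function.eval i ⁻¹' ({b} : Set (Fin m))).indicator fun _ ↦ (1 : ℝ)) X := by
  classical simp [load, indicator_apply]

theorem uniformChoices_real_load_le_le_exp (b : Fin m) {t : ℝ} (ht : t ≤ 0) (c : ℝ) :
    (uniformChoices n m).real {X | (load X b : ℝ) ≤ c} ≤
      Real.exp (-t * c + (Real.exp t - 1) * (n / m)) := by
  have : NeZero m := ⟨b.pos.ne'⟩
  have hindep : iIndepSet (fun i ↦ Function.eval i ⁻¹' {b}) (uniformChoices n m) :=
    iIndepSet_pi_eval_preimage _ fun _ ↦ measurableSet_singleton b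
  have hmean : ∑ i : Fin n, (uniformChoices n m).real (Function.eval i ⁻¹' {b}) = n / m := by
    simp [uniformChoices_real_eval_preimage_singleton, div_eq_mul_inv]
  simpa only [load_eq_sum_indicator, hmean] using
    measureReal_sum_indicator_one_le_le_exp (fun i ↦ measurable_pi_apply i
      (measurableSet_singleton b)) hindep Finset.univ ht c

theorem uniformChoices_real_load_le_quarter_le_two_rpow (b : Fin m) {L : ℝ} (hL : 0 ≤ L)
    (hmean : 4 / 5 * L ≤ n / m) :
    (uniformChoices n m).real {X | (load X b : ℝ) ≤ 1 / 4 * L} ≤ (2 : ℝ) ^ (-(1 / 3) * L) := by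
  have hlog4 : Real.log 4 = 2 * Real.log 2 := by
    rw [show (4 : ℝ) = 2 ^ 2 by norm_num, Real.log_pow, Nat.cast_ofNat]
  have hexp : Real.exp (-Real.log 4) = 1 / 4 := by
    rw [Real.exp_neg, Real.exp_log (by norm_num), one_div]
  have hL2 : L * Real.log 2 ≤ L * (18 / 25) := by
    gcongr
    linarith [Real.log_two_lt_d9]
  calc (uniformChoices n m).real {X | (load X b : ℝ) ≤ 1 / 4 * L}
    _ ≤ Real.exp (-(-Real.log 4) * (1 / 4 * L) + (Real.exp (-Real.log 4) - 1) * (n / m)) :=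
      uniformChoices_real_load_le_le_exp b (by simp [Real.log_nonneg]) _
    _ ≤ Real.exp (Real.log 2 * (-(1 / 3) * L)) := by
      rw [hexp, hlog4]
      gcongr
      linarith
    _ = (2 : ℝ) ^ (-(1 / 3) * L) := (Real.rpow_def_of_pos two_pos _).symm

end UniformChoices

lemma logb_two_le_div_four {x : ℝ} (hx : 16 ≤ x) : Real.logb 2 x ≤ x / 4 := by
  have hexp : Real.exp 1 ≤ 16 := by linarith [Real.exp_one_lt_d9]
  have hdecr : Real.log x / x ≤ Real.log 16 / 16 :=
    Real.log_div_self_antitoneOn hexp (hexp.trans hx) hx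
  have hlog16 : Real.log 16 = 4 * Real.log 2 := by
    rw [show (16 : ℝ) = 2 ^ 4 by norm_num, Real.log_pow, Nat.cast_ofNat]
  rw [hlog16, div_le_iff₀ (by linarith)] at hdecr
  rw [Real.logb, div_le_iff₀ (Real.log_pos one_lt_two)]
  linarith

lemma four_fifths_mul_logb_two_le_div_ceil {x : ℝ} (hx : 16 ≤ x) :
    4 / 5 * Real.logb 2 x ≤ x / ⌈x / Real.logb 2 x⌉₊ := by
  have hlog : 0 < Real.logb 2 x := Real.logb_pos one_lt_two (by linarith)
  have hratio : 4 ≤ x / Real.logb 2 x := by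
    rw [le_div_iff₀ hlog]
    linarith [logb_two_le_div_four hx]
  have hceil : (⌈x / Real.logb 2 x⌉₊ : ℝ) ≤ 5 / 4 * (x / Real.logb 2 x) := by
    linarith [Nat.ceil_lt_add_one (zero_le_four.trans hratio)]
  calc 4 / 5 * Real.logb 2 x
    _ = x / (5 / 4 * (x / Real.logb 2 x)) := by field_simp
    _ ≤ x / ⌈x / Real.logb 2 x⌉₊ := by
      gcongr

/-- Lower-tail bound, per group: when `n` stations independently and uniformly at
random each choose one of `m = ⌈n / log₂ n⌉` groups, for every fixed group `b` the
probability that the load of `b` is at most `(1/4)·log₂ n` is at most `n^(-1/3)`. -/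
theorem group_load_lower_tail :
    ∃ n₀ : ℕ, ∀ n : ℕ, n₀ ≤ n →
      ∀ b : Fin ⌈(n : ℝ) / Real.logb 2 n⌉₊,
        uniformChoices n ⌈(n : ℝ) / Real.logb 2 n⌉₊
            {X | (load X b : ℝ) ≤ (1 / 4) * Real.logb 2 n} ≤
          ENNReal.ofReal ((n : ℝ) ^ (-(1 / 3) : ℝ)) := by
  refine ⟨16, fun n hn b ↦ ?_⟩
  have : NeZero ⌈(n : ℝ) / Real.logb 2 n⌉₊ := ⟨b.pos.ne'⟩
  have hn16 : (16 : ℝ) ≤ n := mod_cast hn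
  have hlog : 0 ≤ Real.logb 2 n := Real.logb_nonneg one_lt_two (by linarith)
  have htail := uniformChoices_real_load_le_quarter_le_two_rpow b hlog
    (four_fifths_mul_logb_two_le_div_ceil hn16)
  rw [mul_comm (-(1 / 3) : ℝ), Real.rpow_mul zero_le_two,
    Real.rpow_logb two_pos (by norm_num) (by linarith)] at htail
  exact ENNReal.le_ofReal_iff_toReal_le (measure_ne_top _ _) (by positivity) |>.2 htail
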